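/- Let α be a type and let R, Ro, Ri be binary relations on α with Ro ⊆ R and Ri ⊆ R. Assume the outermost local commutation property: whenever Ro G H and R G J with H ≠ J, either Ro J H, or there exists K with R H K and Ro J K; and assume the innermost local commutation property: whenever R G H and Ri G J with H ≠ J, either R J H, or there exists K with Ri H K and R J K. Suppose G Ro^n H, G R^m J, and G Ri^k K, where H, J, and K are all R-normal. Then H = J, J = K, n ≤ m, and m ≤ k. -/

import Mathlib

/-- `NSteps R n x y` : there is a chain `x = f 0, f 1, …, f n = y` with
`R (f i) (f (i+1))` for each `i < n`, i.e. an `n`-step `R`-reduction sequence. -/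
def NSteps {α : Type*} (R : α → α → Prop) (n : ℕ) (x y : α) : Prop :=
  ∃ f : ℕ → α, f 0 = x ∧ f n = y ∧ ∀ i < n, R (f i) (f (i + 1))

/-- `x` is `R`-normal: no `R`-step is possible from `x`. -/
def RNormal {α : Type*} (R : α → α → Prop) (x : α) : Prop :=
  ¬ ∃ y, R x y

/-!
Suppose `S` commutes locally with `T`, and let `z` be `S`-normal. Replacing `x` by an `S`-successor
strictly shortens any `T`-reduction from `x` to `z`: push the `S`-step along the `T`-reduction,
which never adds a `T`-step. The `S`-step cannot survive until `z`, and it can disappear only by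
coinciding with a `T`-step, which is thereby saved. So an `n`-step `S`-reduction saves at least `n`
of the `T`-steps, and when it ends in a `T`-normal element, no `T`-step is left: it has reached `z`.
The pairs `(Ro, R)` and `(R, Ri)` give the two comparisons.
-/

section

variable {α : Type*} {R S T : α → α → Prop} {n m : ℕ} {x y z : α}

theorem nSteps_zero : NSteps R 0 x y ↔ x = y := by
  constructor
  · rintro ⟨f, rfl, rfl, -⟩
    rfl
  · rintro rfl
    exact ⟨fun _ => x, rfl, rfl, fun _ hi => absurd hi (Nat.not_lt_zero _)⟩

theorem nSteps_succ : NSteps R (n + 1) x y ↔ ∃ z, R x z ∧ NSteps R n z y := by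
  constructor
  · rintro ⟨f, rfl, rfl, hf⟩
    exact ⟨f 1, hf 0 n.succ_pos, fun i => f (i + 1), rfl, rfl,
      fun i hi => hf (i + 1) (Nat.succ_lt_succ hi)⟩
  · rintro ⟨z, hxz, f, rfl, rfl, hf⟩
    refine ⟨fun i => Nat.casesOn i x f, rfl, rfl, fun i hi => ?_⟩
    cases i with
    | zero => exact hxz
    | succ i => exact hf i (Nat.lt_of_succ_lt_succ hi)

theorem RNormal.anti (hSR : S ≤ R) (hx : RNormal R x) : RNormal S x :=
  fun ⟨y, hxy⟩ => hx ⟨y, hSR x y hxy⟩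

theorem RNormal.eq_of_nSteps (hx : RNormal R x) (hxy : NSteps R n x y) : x = y := by
  cases n with
  | zero => exact nSteps_zero.1 hxy
  | succ n =>
    obtain ⟨u, hxu, -⟩ := nSteps_succ.1 hxy
    exact absurd ⟨u, hxu⟩ hx

/-- Local commutation of `S` with `T`, as satisfied by outermost with generic reduction and by
generic with innermost reduction. It is not symmetric: of two distinct results of an `S`-step and a
`T`-step, only the latter may reduce directly to the former. -/
def LocallyCommutes (S T : α → α → Prop) : Prop :=
  ∀ x y z, S x y → T x z → y ≠ z → S z y ∨ ∃ w, T y w ∧ S z w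

namespace LocallyCommutes

theorem exists_lt_nSteps (hST : LocallyCommutes S T) (hxy : S x y) (hxz : NSteps T m x z)
    (hz : RNormal S z) : ∃ k < m, NSteps T k y z := by
  induction m generalizing x y with
  | zero =>
    obtain rfl := nSteps_zero.1 hxz
    exact absurd ⟨y, hxy⟩ hz
  | succ m ih =>
    obtain ⟨u, hxu, huz⟩ := nSteps_succ.1 hxz
    obtain rfl | hyu := eq_or_ne y u
    · exact ⟨m, m.lt_succ_self, huz⟩
    obtain huy | ⟨w, hyw, huw⟩ := hST x y u hxy hxu hyu
    · obtain ⟨k, hkm, hyz⟩ := ih huy huz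
      exact ⟨k, hkm.trans m.lt_succ_self, hyz⟩
    · obtain ⟨k, hkm, hwz⟩ := ih huw huz
      exact ⟨k + 1, Nat.succ_lt_succ hkm, nSteps_succ.2 ⟨w, hyw, hwz⟩⟩

theorem exists_add_le_nSteps (hST : LocallyCommutes S T) (hxy : NSteps S n x y)
    (hxz : NSteps T m x z) (hz : RNormal S z) : ∃ k, n + k ≤ m ∧ NSteps T k y z := by
  induction n generalizing x m with
  | zero =>
    obtain rfl := nSteps_zero.1 hxy
    exact ⟨m, (Nat.zero_add m).le, hxz⟩
  | succ n ih =>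
    obtain ⟨u, hxu, huy⟩ := nSteps_succ.1 hxy
    obtain ⟨l, hlm, huz⟩ := hST.exists_lt_nSteps hxu hxz hz
    obtain ⟨k, hkl, hyz⟩ := ih huy huz
    exact ⟨k, by omega, hyz⟩

theorem eq_and_le_of_nSteps (hST : LocallyCommutes S T) (hxy : NSteps S n x y)
    (hxz : NSteps T m x z) (hy : RNormal T y) (hz : RNormal S z) : y = z ∧ n ≤ m := by
  obtain ⟨k, hkm, hyz⟩ := hST.exists_add_le_nSteps hxy hxz hz
  exact ⟨hy.eq_of_nSteps hyz, le_of_add_le_left hkm⟩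

end LocallyCommutes

end

theorem strategies_confluence
    {α : Type*} (R Ro Ri : α → α → Prop)
    (hsubo : ∀ x y, Ro x y → R x y)
    (hsubi : ∀ x y, Ri x y → R x y)
    (hcommo : ∀ G H J, Ro G H → R G J → H ≠ J →
      Ro J H ∨ ∃ K, R H K ∧ Ro J K)
    (hcommi : ∀ G H J, R G H → Ri G J → H ≠ J →
      R J H ∨ ∃ K, Ri H K ∧ R J K)
    (n m k : ℕ) (G H J K : α)
    (hH : NSteps Ro n G H) (hJ : NSteps R m G J) (hK : NSteps Ri k G K)
    (hHnf : RNormal R H) (hJnf : RNormal R J) (hKnf : RNormal R K) :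
    H = J ∧ J = K ∧ n ≤ m ∧ m ≤ k := by
  have outermost_generic : LocallyCommutes Ro R := hcommo
  have generic_innermost : LocallyCommutes R Ri := hcommi
  obtain ⟨hHJ, hnm⟩ := outermost_generic.eq_and_le_of_nSteps hH hJ hHnf (hJnf.anti hsubo)
  obtain ⟨hJK, hmk⟩ := generic_innermost.eq_and_le_of_nSteps hJ hK (hJnf.anti hsubi) hKnf
  exact ⟨hHJ, hJK, hnm, hmk⟩
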